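/- Let (H, V, ε, α) be a crossed module: H and V are groups, ε: V → H and α: H → Aut(V) are group homomorphisms satisfying ε(α(h)(v)) = h ε(v) h⁻¹ and α(ε(v))(v') = v v' v⁻¹ for all h ∈ H and v, v' ∈ V. For n ≥ 0, let N_n be the set of tuples ((h_{ij})_{0 ≤ i ≤ j ≤ n}, (v_{ijk})_{0 ≤ i ≤ j ≤ k ≤ n}) with h_{ij} ∈ H, v_{ijk} ∈ V, satisfying: (1) h_{ii} = e for all i, and v_{iij} = v_{ijj} = e for all i ≤ j; (2) h_{ik} = ε(v_{ijk}) h_{ij} h_{jk} for all i ≤ j ≤ k; (3) v_{ikℓ} v_{ijk} = v_{ijℓ} · α(h_{ij})(v_{jkℓ}) for all i ≤ j ≤ k ≤ ℓ. Then the map N_n → H^n × V^{n(n−1)/2} sending a tuple to ((h_{0i})_{1 ≤ i ≤ n}, (v_{0ij})_{1 ≤ i < j ≤ n}) is a bijection. -/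

import Mathlib

/-- The conditions defining an `n`-simplex of the nerve of a crossed module `(H, V, ε, α)`:
a tuple of `h_{ij} ∈ H` (for `0 ≤ i ≤ j ≤ n`) and `v_{ijk} ∈ V` (for `0 ≤ i ≤ j ≤ k ≤ n`)
satisfying (1) `h_{ii} = e`, `v_{iij} = v_{ijj} = e`; (2) `h_{ik} = ε(v_{ijk}) h_{ij} h_{jk}`;
(3) `v_{ikl} v_{ijk} = v_{ijl} α(h_{ij})(v_{jkl})`. -/
def IsNerveSimplex {H V : Type*} [Group H] [Group V]
    (ε : V →* H) (α : H →* MulAut V) (n : ℕ)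
    (q : ({ij : Fin (n + 1) × Fin (n + 1) // ij.1 ≤ ij.2} → H)
        × ({t : Fin (n + 1) × Fin (n + 1) × Fin (n + 1) //
              t.1 ≤ t.2.1 ∧ t.2.1 ≤ t.2.2} → V)) : Prop :=
  (∀ i : Fin (n + 1), q.1 ⟨(i, i), le_refl i⟩ = 1)
  ∧ (∀ (i j : Fin (n + 1)) (hij : i ≤ j),
      q.2 ⟨(i, i, j), ⟨le_refl i, hij⟩⟩ = 1 ∧ q.2 ⟨(i, j, j), ⟨hij, le_refl j⟩⟩ = 1)
  ∧ (∀ (i j k : Fin (n + 1)) (hij : i ≤ j) (hjk : j ≤ k),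
      q.1 ⟨(i, k), le_trans hij hjk⟩
        = ε (q.2 ⟨(i, j, k), ⟨hij, hjk⟩⟩) * q.1 ⟨(i, j), hij⟩ * q.1 ⟨(j, k), hjk⟩)
  ∧ (∀ (i j k l : Fin (n + 1)) (hij : i ≤ j) (hjk : j ≤ k) (hkl : k ≤ l),
      q.2 ⟨(i, k, l), ⟨le_trans hij hjk, hkl⟩⟩ * q.2 ⟨(i, j, k), ⟨hij, hjk⟩⟩
        = q.2 ⟨(i, j, l), ⟨hij, le_trans hjk hkl⟩⟩
          * α (q.1 ⟨(i, j), hij⟩) (q.2 ⟨(j, k, l), ⟨hjk, hkl⟩⟩))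

/-- The map sending an `n`-simplex of the nerve of a crossed module `(H, V, ε, α)` to
`((h_{0i})_{1 ≤ i ≤ n}, (v_{0ij})_{1 ≤ i < j ≤ n}) ∈ H^n × V^{n(n-1)/2}` is a bijection. -/
theorem nerve_simplex_bijection {H V : Type*} [Group H] [Group V]
    (ε : V →* H) (α : H →* MulAut V)
    (hεα : ∀ (h : H) (v : V), ε (α h v) = h * ε v * h⁻¹)
    (hαε : ∀ v v' : V, α (ε v) v' = v * v' * v⁻¹)
    (n : ℕ) :
    Function.Bijective
      (fun p : {q : ({ij : Fin (n + 1) × Fin (n + 1) // ij.1 ≤ ij.2} → H)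
            × ({t : Fin (n + 1) × Fin (n + 1) × Fin (n + 1) //
                  t.1 ≤ t.2.1 ∧ t.2.1 ≤ t.2.2} → V) // IsNerveSimplex ε α n q} =>
        ((fun i : Fin n => p.1.1 ⟨(0, i.succ), Fin.zero_le _⟩,
          fun st : {st : Fin n × Fin n // st.1 < st.2} =>
            p.1.2 ⟨(0, st.1.1.succ, st.1.2.succ),
              ⟨Fin.zero_le _, Fin.succ_le_succ_iff.mpr st.2.le⟩⟩) :
          (Fin n → H) × ({st : Fin n × Fin n // st.1 < st.2} → V))) := by
  constructor
  · rintro ⟨⟨h, v⟩, h1, h2, h3, h4⟩ ⟨⟨h', v'⟩, h1', h2', h3', h4'⟩ heq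
    simp only [Prod.mk.injEq] at heq
    obtain ⟨e1, e2⟩ := heq
    simp only at h1 h2 h3 h4 h1' h2' h3' h4' e1 e2
    have a0 : ∀ i : Fin (n + 1), h ⟨(0, i), Fin.zero_le _⟩ = h' ⟨(0, i), Fin.zero_le _⟩ := by
      intro i
      induction i using Fin.cases with
      | zero => exact (h1 0).trans (h1' 0).symm
      | succ i => exact congrFun e1 i
    have w0 : ∀ (i j : Fin (n + 1)) (hij : i ≤ j),
        v ⟨(0, i, j), ⟨Fin.zero_le _, hij⟩⟩ = v' ⟨(0, i, j), ⟨Fin.zero_le _, hij⟩⟩ := by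
      intro i j hij
      rcases hij.eq_or_lt with rfl | hlt
      · exact (h2 0 i (Fin.zero_le _)).2.trans (h2' 0 i (Fin.zero_le _)).2.symm
      induction i using Fin.cases with
      | zero => exact (h2 0 j hij).1.trans (h2' 0 j hij).1.symm
      | succ i =>
        induction j using Fin.cases with
        | zero => exact absurd hlt (Fin.not_lt_zero _)
        | succ j => exact congrFun e2 ⟨(i, j), Fin.succ_lt_succ_iff.mp hlt⟩
    have hh : h = h' := by
      funext ⟨⟨i, j⟩, hij⟩
      have A := h3 0 i j (Fin.zero_le _) hij
      have B := h3' 0 i j (Fin.zero_le _) hij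
      rw [a0, a0, w0 i j hij, B] at A
      exact (mul_left_cancel A).symm
    have hv : v = v' := by
      funext ⟨⟨i, j, k⟩, hij, hjk⟩
      have A := h4 0 i j k (Fin.zero_le _) hij hjk
      have B := h4' 0 i j k (Fin.zero_le _) hij hjk
      rw [a0, w0 i j hij, w0 j k hjk, w0 i k (hij.trans hjk), B] at A
      exact ((α _).injective (mul_left_cancel A)).symm
    subst hh hv
    rfl
  · rintro ⟨f, g⟩
    obtain ⟨a, ha0, has⟩ : ∃ a : Fin (n + 1) → H, a 0 = 1 ∧ ∀ i : Fin n, a i.succ = f i :=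
      ⟨Fin.cases 1 f, rfl, fun _ => rfl⟩
    obtain ⟨w, hw0, hwd, hws⟩ : ∃ w : Fin (n + 1) → Fin (n + 1) → V, (∀ j, w 0 j = 1) ∧
        (∀ j, w j j = 1) ∧
        ∀ (i j : Fin n) (hij : i < j), w i.succ j.succ = g ⟨(i, j), hij⟩ := by
      refine ⟨fun i j => Fin.cases 1 (fun i => Fin.cases 1
        (fun j => if hij : i < j then g ⟨(i, j), hij⟩ else 1) j) i, fun _ => rfl, ?_, ?_⟩
      · intro j
        induction j using Fin.cases with
        | zero => rfl
        | succ j => simp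
      · intro i j hij
        simp [hij]
    have hεi : ∀ (x : H) (v : V), ε ((α x)⁻¹ v) = x⁻¹ * ε v * x := by
      intro x v
      rw [← map_inv, hεα, inv_inv]
    refine ⟨⟨(fun p => (a p.1.1)⁻¹ * (ε (w p.1.1 p.1.2))⁻¹ * a p.1.2,
      fun t => (α (a t.1.1))⁻¹ ((w t.1.1 t.1.2.2)⁻¹ * w t.1.2.1 t.1.2.2 * w t.1.1 t.1.2.1)),
      ?_, ?_, ?_, ?_⟩, ?_⟩
    · intro i
      simp [hwd]
    · intro i j hij
      simp [hwd]
    · intro i j k hij hjk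
      simp only [hεi, map_mul, map_inv]
      group
    · intro i j k l hij hjk hkl
      simp only
      apply (α (a i)).injective
      have key : ∀ x : V, α (a i) (α ((a i)⁻¹ * (ε (w i j))⁻¹ * a j) ((α (a j))⁻¹ x))
          = (w i j)⁻¹ * x * w i j := by
        intro x
        have := hαε (w i j)⁻¹ x
        rw [inv_inv, map_inv] at this
        rw [← this]
        simp only [← map_inv, ← MulAut.mul_apply, ← map_mul]
        congr 2
        group
      rw [map_mul (α (a i)), map_mul (α (a i)) ((α (a i))⁻¹ ((w i l)⁻¹ * w j l * w i j)), key]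
      simp only [MulAut.apply_inv_self]
      group
    · simp only [Prod.mk.injEq]
      constructor
      · funext i
        simp [ha0, hw0, has]
      · funext ⟨⟨i, j⟩, hij⟩
        simp [ha0, hw0, hws i j hij]
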